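/- Suppose X and Y are quasiconvex and complete metric spaces, G ⊊ X is a domain, G′ ⊊ Y is a quasiconvex domain, and both f : G → G′ and f⁻¹ : G′ → G are weakly quasisymmetric. Then for every uniform subdomain D ⊂ G, the image D′ = f(D) is uniform, with the uniformity constant of D′ depending only on the quasiconvexity constants of X, Y, G′, the uniformity constant of D, and the weak quasisymmetry constants of f and f⁻¹. -/

import Mathlib

open Metric Set Filter

section QHDefs

variable {X : Type*} [MetricSpace X] {Y : Type*} [MetricSpace Y]

/-- Distance to the boundary of `G`. -/
noncomputable def bdist (G : Set X) (z : X) : ℝ := Metric.infDist z (frontier G)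

/-- A unit-speed (1-Lipschitz, arclength-parametrized) rectifiable curve in `G`
from `x` to `y`, parametrized on `[0, L]`, where `L` is its length. -/
structure CurveIn (G : Set X) (γ : ℝ → X) (L : ℝ) (x y : X) : Prop where
  nonneg : 0 ≤ L
  lip : LipschitzOnWith 1 γ (Set.Icc 0 L)
  source : γ 0 = x
  target : γ L = y
  mem : ∀ t ∈ Set.Icc 0 L, γ t ∈ G

/-- Quasihyperbolic length of the subcurve `γ|[s,t]` in `G`: `∫_γ |dz|/δ_G(z)`. -/
noncomputable def qhLengthOn (G : Set X) (γ : ℝ → X) (s t : ℝ) : ℝ :=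
  ∫ u in s..t, 1 / bdist G (γ u)

/-- Quasihyperbolic length of a curve parametrized on `[0,L]`. -/
noncomputable def qhLength (G : Set X) (γ : ℝ → X) (L : ℝ) : ℝ := qhLengthOn G γ 0 L

/-- Quasihyperbolic distance in `G`. -/
noncomputable def qhDist (G : Set X) (x y : X) : ℝ :=
  sInf {l | ∃ γ L, CurveIn G γ L x y ∧ qhLength G γ L = l}

/-- `X` is a `c`-quasiconvex metric space. -/
def QCSpace (c : ℝ) (X : Type*) [MetricSpace X] : Prop :=
  ∀ x y : X, ∃ γ L, CurveIn (Set.univ : Set X) γ L x y ∧ L ≤ c * dist x y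

/-- A set `G` is `c`-quasiconvex. -/
def QCSet (c : ℝ) (G : Set X) : Prop :=
  ∀ x ∈ G, ∀ y ∈ G, ∃ γ L, CurveIn G γ L x y ∧ L ≤ c * dist x y

/-- A domain: a nonempty connected open set. -/
def IsDomainSet (G : Set X) : Prop := IsOpen G ∧ IsConnected G

/-- A proper domain: a nonempty connected open set, different from the whole space. -/
def IsProperDomain (G : Set X) : Prop := IsOpen G ∧ IsConnected G ∧ G ≠ Set.univ

/-- `G` is an `a`-John domain: each pair of points is joined by a rectifiable arc
satisfying the cone condition. -/
def IsJohn (a : ℝ) (G : Set X) : Prop :=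
  ∀ x ∈ G, ∀ y ∈ G, ∃ γ L, CurveIn G γ L x y ∧
    ∀ t ∈ Set.Icc 0 L, min t (L - t) ≤ a * bdist G (γ t)

/-- `G` is a `b`-uniform domain: each pair of points is joined by a double `b`-cone arc. -/
def IsUniform (b : ℝ) (G : Set X) : Prop :=
  ∀ x ∈ G, ∀ y ∈ G, ∃ γ L, CurveIn G γ L x y ∧ L ≤ b * dist x y ∧
    ∀ t ∈ Set.Icc 0 L, min t (L - t) ≤ b * bdist G (γ t)

/-- `G` is a locally `a`-John domain. -/
def LocallyJohn (a : ℝ) (G : Set X) : Prop :=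
  ∀ x ∈ G, ∀ r : ℝ, 0 < r → r ≤ bdist G x → IsJohn a (Metric.ball x r)

/-- The `h`-coarse quasihyperbolic length of the subcurve `γ|[s,t]` in `G`:
the supremum of sums `Σ k_G(x_{j-1},x_j)` over `h`-coarse sequences of successive
points of the arc (with the convention that it is `0` if there are none). -/
noncomputable def coarseQHLength (G : Set X) (γ : ℝ → X) (s t h : ℝ) : ℝ :=
  sSup {S | ∃ n : ℕ, 0 < n ∧ ∃ u : ℕ → ℝ,
    (∀ i < n, u i ≤ u (i + 1)) ∧ (∀ i ≤ n, u i ∈ Set.Icc s t) ∧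
    (∀ i < n, h ≤ qhDist G (γ (u i)) (γ (u (i + 1)))) ∧
    S = ∑ i ∈ Finset.range n, qhDist G (γ (u i)) (γ (u (i + 1)))}

/-- `γ` (parametrized on `[0,L]`) is a `(ν,h)`-solid arc in `G`. -/
def SolidArc (G : Set X) (γ : ℝ → X) (L ν h : ℝ) : Prop :=
  ∀ s t : ℝ, 0 ≤ s → s ≤ t → t ≤ L →
    coarseQHLength G γ s t h ≤ ν * qhDist G (γ s) (γ t)

/-- `γ` (parametrized on `[0,L]`) is an `ε`-short arc in `G`. -/
def ShortArc (G : Set X) (γ : ℝ → X) (L ε : ℝ) : Prop :=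
  qhLength G γ L ≤ qhDist G (γ 0) (γ L) + ε

/-- A map is weakly `H`-quasisymmetric. -/
def WeakQS (H : ℝ) (f : X → Y) : Prop :=
  ∀ x a b : X, dist x a ≤ dist x b → dist (f x) (f a) ≤ H * dist (f x) (f b)

/-- Image of a subset `D ⊆ G` under a homeomorphism `f : G ≃ₜ G'`, as a subset of `Y`. -/
def imSet {G : Set X} {G' : Set Y} (f : ↥G ≃ₜ ↥G') (D : Set X) : Set Y :=
  Subtype.val '' (f '' (Subtype.val ⁻¹' D))

/-- `f : G ≃ₜ G'` is `M`-quasihyperbolic. -/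
def MQH (M : ℝ) {G : Set X} {G' : Set Y} (f : ↥G ≃ₜ ↥G') : Prop :=
  ∀ x y : ↥G, (1 / M) * qhDist G ↑x ↑y ≤ qhDist G' ↑(f x) ↑(f y) ∧
    qhDist G' ↑(f x) ↑(f y) ≤ M * qhDist G ↑x ↑y

/-- `f : G ≃ₜ G'` is `C`-coarsely `M`-quasihyperbolic. -/
def CQH (M C : ℝ) {G : Set X} {G' : Set Y} (f : ↥G ≃ₜ ↥G') : Prop :=
  ∀ x y : ↥G, (qhDist G ↑x ↑y - C) / M ≤ qhDist G' ↑(f x) ↑(f y) ∧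
    qhDist G' ↑(f x) ↑(f y) ≤ M * qhDist G ↑x ↑y + C

/-- `f : G ≃ₜ G'` is freely `φ`-quasiconformal: in every subdomain, the
quasihyperbolic distances of `f` and `f⁻¹` are controlled by `φ`. -/
def FQC (φ : ℝ → ℝ) {G : Set X} {G' : Set Y} (f : ↥G ≃ₜ ↥G') : Prop :=
  ∀ D : Set X, ∀ hD : D ⊆ G, IsDomainSet D →
    ∀ x : X, ∀ hx : x ∈ D, ∀ y : X, ∀ hy : y ∈ D,
      qhDist (imSet f D) ↑(f ⟨x, hD hx⟩) ↑(f ⟨y, hD hy⟩) ≤ φ (qhDist D x y) ∧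
      qhDist D x y ≤ φ (qhDist (imSet f D) ↑(f ⟨x, hD hx⟩) ↑(f ⟨y, hD hy⟩))

end QHDefs

section Curves

variable {X : Type*} [MetricSpace X] {Y : Type*} [MetricSpace Y]

lemma CurveIn.dist_le {G : Set X} {γ : ℝ → X} {L : ℝ} {x y : X} (h : CurveIn G γ L x y)
    {s t : ℝ} (hs : s ∈ Icc 0 L) (ht : t ∈ Icc 0 L) : dist (γ s) (γ t) ≤ |s - t| := by
  simpa [Real.dist_eq] using h.lip.dist_le_mul s hs t ht

lemma CurveIn.of_dist_le {G : Set X} {γ : ℝ → X} {L : ℝ} {x y : X} (hL : 0 ≤ L)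
    (hd : ∀ s ∈ Icc 0 L, ∀ t ∈ Icc 0 L, dist (γ s) (γ t) ≤ |s - t|)
    (h0 : γ 0 = x) (h1 : γ L = y) (hm : ∀ t ∈ Icc 0 L, γ t ∈ G) : CurveIn G γ L x y :=
  ⟨hL, LipschitzOnWith.of_dist_le_mul fun s hs t ht => by
    simpa [Real.dist_eq] using hd s hs t ht, h0, h1, hm⟩

lemma CurveIn.refl {G : Set X} {x : X} (hx : x ∈ G) : CurveIn G (fun _ => x) 0 x x :=
  .of_dist_le le_rfl (by simp) rfl rfl fun _ _ => hx

lemma CurveIn.reverse {G : Set X} {γ : ℝ → X} {L : ℝ} {x y : X} (h : CurveIn G γ L x y) :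
    CurveIn G (fun t => γ (L - t)) L y x := by
  have hm : ∀ t ∈ Icc 0 L, L - t ∈ Icc 0 L := fun t ht => ⟨by linarith [ht.2], by linarith [ht.1]⟩
  refine .of_dist_le h.nonneg (fun s hs t ht => ?_) (by simpa using h.target)
    (by simpa using h.source) fun t ht => h.mem _ (hm t ht)
  refine (h.dist_le (hm s hs) (hm t ht)).trans_eq ?_
  rw [abs_sub_comm]
  congr 1
  ring

lemma CurveIn.truncate {G : Set X} {γ : ℝ → X} {L : ℝ} {x y : X} (h : CurveIn G γ L x y) {t : ℝ}
    (ht : t ∈ Icc 0 L) : CurveIn G γ t x (γ t) :=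
  ⟨ht.1, h.lip.mono (Icc_subset_Icc_right ht.2), h.source, rfl,
    fun u hu => h.mem u ⟨hu.1, hu.2.trans ht.2⟩⟩

lemma CurveIn.concat {G : Set X} {γ₁ γ₂ : ℝ → X} {L₁ L₂ : ℝ} {x y z : X}
    (h₁ : CurveIn G γ₁ L₁ x y) (h₂ : CurveIn G γ₂ L₂ y z) :
    ∃ γ, CurveIn G γ (L₁ + L₂) x z ∧ (∀ t ≤ L₁, γ t = γ₁ t) ∧
      ∀ t, L₁ ≤ t → γ t = γ₂ (t - L₁) := by
  have e₁ : ∀ t ≤ L₁, (if t ≤ L₁ then γ₁ t else γ₂ (t - L₁)) = γ₁ t := fun t ht => if_pos ht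
  have e₂ : ∀ t, L₁ ≤ t → (if t ≤ L₁ then γ₁ t else γ₂ (t - L₁)) = γ₂ (t - L₁) := by
    intro t ht
    rcases ht.eq_or_lt with rfl | ht
    · simp [h₁.target, h₂.source]
    · exact if_neg ht.not_ge
  have n₁ := h₁.nonneg
  have n₂ := h₂.nonneg
  have key : ∀ s ∈ Icc 0 (L₁ + L₂), ∀ t ∈ Icc 0 (L₁ + L₂), s ≤ t →
      dist (if s ≤ L₁ then γ₁ s else γ₂ (s - L₁)) (if t ≤ L₁ then γ₁ t else γ₂ (t - L₁))
        ≤ t - s := by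
    intro s hs t ht hst
    rcases le_total t L₁ with htL | htL
    · rw [e₁ t htL, e₁ s (hst.trans htL)]
      have := h₁.dist_le (s := s) (t := t) ⟨hs.1, hst.trans htL⟩ ⟨ht.1, htL⟩
      rwa [abs_sub_comm, abs_of_nonneg (by linarith)] at this
    · have b₂ : t - L₁ ∈ Icc 0 L₂ := ⟨by linarith, by linarith [ht.2]⟩
      rw [e₂ t htL]
      rcases le_total s L₁ with hsL | hsL
      · rw [e₁ s hsL]
        have a₁ := h₁.dist_le (s := s) (t := L₁) ⟨hs.1, hsL⟩ ⟨n₁, le_rfl⟩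
        have a₂ := h₂.dist_le (s := 0) (t := t - L₁) ⟨le_rfl, n₂⟩ b₂
        rw [abs_sub_comm, abs_of_nonneg (by linarith)] at a₁ a₂
        rw [h₁.target] at a₁
        rw [h₂.source] at a₂
        linarith [dist_triangle (γ₁ s) y (γ₂ (t - L₁))]
      · rw [e₂ s hsL]
        have := h₂.dist_le (s := s - L₁) (t := t - L₁) ⟨by linarith, by linarith [hs.2]⟩ b₂
        rw [abs_sub_comm, abs_of_nonneg (by linarith)] at this
        linarith
  refine ⟨fun t => if t ≤ L₁ then γ₁ t else γ₂ (t - L₁), .of_dist_le (by linarith) ?_ ?_ ?_ ?_,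
    e₁, e₂⟩
  · intro s hs t ht
    rcases le_total s t with hst | hst
    · rw [abs_sub_comm, abs_of_nonneg (by linarith)]
      exact key s hs t ht hst
    · rw [dist_comm, abs_of_nonneg (by linarith)]
      exact key t ht s hs hst
  · exact (e₁ 0 n₁).trans h₁.source
  · refine (e₂ _ (by linarith)).trans ?_
    simpa using h₂.target
  · intro t ht
    rcases le_total t L₁ with htL | htL
    · simp only [e₁ t htL]
      exact h₁.mem _ ⟨ht.1, htL⟩
    · simp only [e₂ t htL]
      exact h₂.mem _ ⟨by linarith, by linarith [ht.2]⟩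

lemma CurveIn.continuousOn {G : Set X} {γ : ℝ → X} {L : ℝ} {x y : X} (h : CurveIn G γ L x y) :
    ContinuousOn γ (Icc 0 L) := h.lip.continuousOn

/-- A curve that starts in `D` and leaves it meets the frontier of `D`. -/
lemma CurveIn.exists_mem_frontier {G D : Set X} {γ : ℝ → X} {L : ℝ} {x y : X}
    (h : CurveIn G γ L x y) (hx : x ∈ D) {t : ℝ} (ht : t ∈ Icc 0 L) (hn : γ t ∉ D) :
    ∃ u ∈ Icc 0 L, γ u ∈ frontier D := by
  have hc : IsPreconnected (γ '' Icc 0 L) := isPreconnected_Icc.image γ h.continuousOn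
  have hx' : x ∈ γ '' Icc 0 L := ⟨0, ⟨le_rfl, h.nonneg⟩, h.source⟩
  by_contra hcon
  push Not at hcon
  have hdis : Disjoint (γ '' Icc 0 L) (frontier D) := by
    rw [Set.disjoint_left]
    rintro _ ⟨u, hu, rfl⟩
    exact hcon u hu
  have hsub : γ '' Icc 0 L ⊆ interior D ∪ (closure D)ᶜ := by
    intro z hz
    by_cases hzi : z ∈ interior D
    · exact Or.inl hzi
    · exact Or.inr fun hzc => Set.disjoint_left.1 hdis hz ⟨hzc, hzi⟩
  have hxi : x ∈ interior D := (hsub hx').resolve_right fun hxc => hxc (subset_closure hx)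
  have ht' : γ t ∈ (closure D)ᶜ :=
    (hsub ⟨t, ht, rfl⟩).resolve_left fun hi => hn (interior_subset hi)
  obtain ⟨z, -, hz₁, hz₂⟩ := hc _ _ isOpen_interior isClosed_closure.isOpen_compl hsub
    ⟨x, hx', hxi⟩ ⟨γ t, ⟨t, ht, rfl⟩, ht'⟩
  exact hz₂ (subset_closure (interior_subset hz₁))

lemma bdist_nonneg (D : Set X) (z : X) : 0 ≤ bdist D z := infDist_nonneg

lemma bdist_le_add_dist (D : Set X) (z w : X) : bdist D z ≤ bdist D w + dist z w :=
  infDist_le_infDist_add_dist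

/-- A curve that starts in `D` and is shorter than the distance to the frontier stays in `D`. -/
lemma CurveIn.mem_of_lt_bdist {G D : Set X} {γ : ℝ → X} {L : ℝ} {x y : X}
    (h : CurveIn G γ L x y) (hx : x ∈ D) (hL : L < bdist D x) {t : ℝ} (ht : t ∈ Icc 0 L) :
    γ t ∈ D := by
  by_contra hn
  obtain ⟨u, hu, hf⟩ := h.exists_mem_frontier hx ht hn
  have h₁ : bdist D x ≤ dist x (γ u) := infDist_le_dist_of_mem hf
  have h₂ := h.dist_le (s := 0) (t := u) ⟨le_rfl, h.nonneg⟩ hu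
  rw [abs_sub_comm, abs_of_nonneg (by linarith [hu.1]), h.source] at h₂
  linarith [hu.2]

lemma QCSpace.mem_of_lt_bdist {c : ℝ} (hX : QCSpace c X) {D : Set X} {x y : X} (hx : x ∈ D)
    (h : c * dist x y < bdist D x) : y ∈ D := by
  obtain ⟨γ, L, hγ, hL⟩ := hX x y
  simpa [hγ.target] using hγ.mem_of_lt_bdist hx (hL.trans_lt h) ⟨hγ.nonneg, le_rfl⟩

lemma QCSpace.frontier_nonempty {c : ℝ} (hX : QCSpace c X) {D : Set X} (hD : D.Nonempty)
    (hD' : D ≠ univ) : (frontier D).Nonempty := by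
  obtain ⟨x, hx⟩ := hD
  obtain ⟨y, hy⟩ := (ne_univ_iff_exists_notMem D).1 hD'
  obtain ⟨γ, L, hγ, -⟩ := hX x y
  obtain ⟨u, -, hu⟩ := hγ.exists_mem_frontier hx ⟨hγ.nonneg, le_rfl⟩ (by rwa [hγ.target])
  exact ⟨_, hu⟩

lemma bdist_pos {D : Set X} (hD : IsOpen D) (hf : (frontier D).Nonempty) {x : X} (hx : x ∈ D) :
    0 < bdist D x :=
  (isClosed_frontier.notMem_iff_infDist_pos hf).1 fun h => h.2 (by rwa [hD.interior_eq])

/-- A finite sequence of points of `D`, each step being short compared with the distance to the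
frontier, can be joined by a curve that stays away from the frontier. -/
lemma QCSpace.exists_curve_of_chain {c : ℝ} (hc : 0 ≤ c) (hY : QCSpace c Y) {D : Set Y}
    {ρ m : ℝ} (q : ℕ → Y) (n : ℕ) (hq : ∀ k ≤ n, q k ∈ D) (hpos : ∀ k ≤ n, 0 < bdist D (q k))
    (hstep : ∀ k < n, dist (q k) (q (k + 1)) ≤ ρ)
    (hsmall : ∀ k < n, c * dist (q k) (q (k + 1)) ≤ bdist D (q k) / 2)
    (hbd : ∀ k ≤ n, m ≤ bdist D (q k)) :
    ∃ γ L, CurveIn D γ L (q 0) (q n) ∧ L ≤ n * (c * ρ) ∧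
      ∀ t ∈ Icc 0 L, m / 2 ≤ bdist D (γ t) := by
  induction n with
  | zero => exact ⟨_, 0, .refl (hq 0 le_rfl), by simp,
    fun t _ => by linarith [hbd 0 le_rfl, hpos 0 le_rfl]⟩
  | succ n ih =>
    obtain ⟨γ₁, L₁, h₁, hL₁, hb₁⟩ := ih (fun k hk => hq k (by omega))
      (fun k hk => hpos k (by omega)) (fun k hk => hstep k (by omega))
      (fun k hk => hsmall k (by omega)) fun k hk => hbd k (by omega)
    obtain ⟨γ₂, L₂, h₂, hL₂⟩ := hY (q n) (q (n + 1))
    have hs := hsmall n (by omega)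
    have hp := hpos n (by omega)
    have hbn := hbd n (by omega)
    have h₂' : CurveIn D γ₂ L₂ (q n) (q (n + 1)) :=
      ⟨h₂.nonneg, h₂.lip, h₂.source, h₂.target, fun t ht =>
        h₂.mem_of_lt_bdist (hq n (by omega)) (by linarith) ht⟩
    have hb₂ : ∀ t ∈ Icc 0 L₂, m / 2 ≤ bdist D (γ₂ t) := by
      intro t ht
      have a₁ := bdist_le_add_dist D (q n) (γ₂ t)
      have a₂ := h₂.dist_le (s := 0) (t := t) ⟨le_rfl, h₂.nonneg⟩ ht
      rw [abs_sub_comm, abs_of_nonneg (by linarith [ht.1]), h₂.source] at a₂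
      linarith [ht.2]
    obtain ⟨γ, h, e₁, e₂⟩ := h₁.concat h₂'
    refine ⟨γ, _, h, ?_, fun t ht => ?_⟩
    · have := mul_le_mul_of_nonneg_left (hstep n (by omega)) hc
      push_cast
      linarith
    · rcases le_total t L₁ with htL | htL
      · rw [e₁ t htL]
        exact hb₁ t ⟨ht.1, htL⟩
      · rw [e₂ t htL]
        exact hb₂ _ ⟨by linarith, by linarith [ht.2]⟩

end Curves

section QuasisymmetryOnSets

variable {X : Type*} [MetricSpace X] {Y : Type*} [MetricSpace Y]

/-- On `D`, distance ratios at most `s` are mapped by `F` to distance ratios at most `M`. -/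
def RatioBound (F : X → Y) (D : Set X) (s M : ℝ) : Prop :=
  ∀ x ∈ D, ∀ a ∈ D, ∀ w ∈ D, dist x a ≤ s * dist x w → dist (F x) (F a) ≤ M * dist (F x) (F w)

/-- The ratio bound obtained by iterating weak `H`-quasisymmetry `n` times along a curve. -/
def chainConst (H : ℝ) : ℕ → ℝ
  | 0 => H
  | n + 1 => (1 + chainConst H n) * H

lemma le_chainConst {H : ℝ} (hH : 1 ≤ H) (n : ℕ) : H ≤ chainConst H n := by
  induction n with
  | zero => exact le_rfl
  | succ n ih => rw [chainConst]; nlinarith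

lemma chainConst_pos {H : ℝ} (hH : 1 ≤ H) (n : ℕ) : 0 < chainConst H n := by
  linarith [le_chainConst hH n]

/-- A weakly quasisymmetric map along a curve. -/
lemma dist_le_chainConst {F : X → Y} {D : Set X} {H : ℝ} (hH : 1 ≤ H) (hF : RatioBound F D 1 H)
    {γ : ℝ → X} {L : ℝ} {x₀ a : X} (hγ : CurveIn D γ L x₀ a) {r : ℝ} (hr : 0 < r) (n : ℕ) :
    ∀ t ∈ Icc 0 L, L - t ≤ n * r → ∀ w ∈ D, dist (γ t) w = r →
      dist (F (γ t)) (F a) ≤ chainConst H n * dist (F (γ t)) (F w) := by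
  have ha : a ∈ D := hγ.target ▸ hγ.mem L ⟨hγ.nonneg, le_rfl⟩
  induction n with
  | zero =>
    intro t ht hn w _ _
    obtain rfl : t = L := le_antisymm ht.2 (by simpa using hn)
    rw [hγ.target, dist_self]
    have := chainConst_pos hH 0
    positivity
  | succ n ih =>
    intro t ht hn w hw hwr
    by_cases har : dist (γ t) a ≤ r
    · refine (hF _ (hγ.mem t ht) a ha w hw (by linarith)).trans ?_
      gcongr
      exact le_chainConst hH _
    · push Not at har
      have hcont : ContinuousOn (fun u => dist (γ t) (γ u)) (Icc t L) :=
        (continuous_const.dist continuous_id).comp_continuousOn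
          (hγ.continuousOn.mono (Icc_subset_Icc_left ht.1))
      obtain ⟨u, hu, hur⟩ := intermediate_value_Icc ht.2 hcont
        (show r ∈ Icc _ _ by simpa [hγ.target] using ⟨hr.le, har.le⟩)
      simp only at hur
      have hu' : u ∈ Icc 0 L := ⟨ht.1.trans hu.1, hu.2⟩
      have hru : r ≤ u - t := by
        have := hγ.dist_le ht hu'
        rwa [hur, abs_sub_comm, abs_of_nonneg (by linarith [hu.1])] at this
      have h₁ := ih u hu' (by push_cast at hn; linarith) (γ t) (hγ.mem t ht) (by rwa [dist_comm])
      have h₂ := hF _ (hγ.mem t ht) _ (hγ.mem u hu') w hw (by linarith)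
      have h₃ := dist_triangle (F (γ t)) (F (γ u)) (F a)
      rw [dist_comm (F (γ u)) (F (γ t))] at h₁
      have hC : 0 ≤ 1 + chainConst H n := by linarith [le_chainConst hH n]
      calc dist (F (γ t)) (F a) ≤ (1 + chainConst H n) * dist (F (γ t)) (F (γ u)) := by linarith
        _ ≤ (1 + chainConst H n) * (H * dist (F (γ t)) (F w)) := by gcongr
        _ = _ := by rw [chainConst]; ring

lemma QCSet.ratioBound {F : X → Y} {D : Set X} {c H s : ℝ} (hc : 0 ≤ c) (hH : 1 ≤ H)
    (hD : QCSet c D) (hF : RatioBound F D 1 H) :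
    RatioBound F D s (chainConst H ⌈c * s⌉₊) := by
  intro x hx a ha w hw h
  rcases (dist_nonneg (x := x) (y := w)).eq_or_lt with h0 | hr
  · have : x = a := dist_le_zero.1 (by rwa [← h0, mul_zero] at h)
    rw [this, dist_self]
    have : 0 < chainConst H ⌈c * s⌉₊ := chainConst_pos hH _
    positivity
  · obtain ⟨γ, L, hγ, hL⟩ := hD x hx a ha
    have := dist_le_chainConst hH hF hγ hr ⌈c * s⌉₊ 0 ⟨le_rfl, hγ.nonneg⟩ ?_ w hw
      (by rw [hγ.source])
    · rwa [hγ.source] at this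
    · calc L - 0 ≤ c * (s * dist x w) := by
            rw [sub_zero]; exact hL.trans (mul_le_mul_of_nonneg_left h hc)
        _ = c * s * dist x w := by ring
        _ ≤ _ := by gcongr; exact Nat.le_ceil _

/-- A bound on large ratios for a left inverse gives a bound on small ratios. -/
lemma RatioBound.of_leftInverse {F : X → Y} {Fi : Y → X} {D : Set X} {D' : Set Y} {M ε : ℝ}
    (hM : 0 < M) (hε : 0 < ε) (hmaps : MapsTo F D D') (hinv : ∀ x ∈ D, Fi (F x) = x)
    (h : RatioBound Fi D' (1 / ε) M) : RatioBound F D (1 / (2 * M)) ε := by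
  intro x hx a ha w hw hxa
  by_contra! hcon
  have h₁ := h (F x) (hmaps hx) (F w) (hmaps hw) (F a) (hmaps ha)
    (by rw [one_div_mul_eq_div, le_div_iff₀ hε]; linarith)
  rw [hinv x hx, hinv w hw, hinv a ha] at h₁
  rw [one_div_mul_eq_div, le_div_iff₀ (by positivity)] at hxa
  have h₂ : dist x w ≤ 0 := by nlinarith [dist_nonneg (x := x) (y := a)]
  have h₃ : x = a := dist_le_zero.1 (by nlinarith [dist_nonneg (x := x) (y := a)])
  rw [h₃, dist_self] at hcon
  nlinarith [dist_nonneg (x := F a) (y := F w)]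

/-- Bounded ratios are compatible with distances to the frontier. -/
lemma dist_le_mul_bdist [CompleteSpace X] {c : ℝ} (hc : 1 ≤ c) (hX : QCSpace c X) {F : X → Y}
    {D : Set X} (hF : ContinuousOn F D) (hD' : IsOpen (F '' D)) (hf' : (frontier (F '' D)).Nonempty)
    {M : ℝ → ℝ} (hM : ∀ s, 0 < M s) (hQ : ∀ s, RatioBound F D s (M s))
    {s Φ : ℝ} (hs : 0 ≤ s) (hΦ0 : 0 < Φ)
    (hΦ : RatioBound F D (2 * c * s) Φ) {p q : X} (hp : p ∈ D) (hq : q ∈ D)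
    (hδ : 0 < bdist D p) (hpq : dist p q ≤ s * bdist D p) :
    dist (F p) (F q) ≤ Φ * bdist (F '' D) (F p) := by
  have hc0 : 0 < c := by linarith
  suffices h : dist (F p) (F q) / Φ ≤ bdist (F '' D) (F p) by
    rwa [div_le_iff₀ hΦ0, mul_comm] at h
  refine (le_infDist hf').2 fun w' hw' => ?_
  rw [div_le_iff₀ hΦ0, mul_comm]
  have hw'n : w' ∉ F '' D := fun h => hw'.2 (by rwa [hD'.interior_eq])
  obtain ⟨u, hu, hut⟩ := mem_closure_iff_seq_limit.1 hw'.1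
  choose w hwD hwu using hu
  obtain rfl : u = fun n => F (w n) := funext fun n => (hwu n).symm
  have hlim : Tendsto (fun n => dist (F p) (F (w n))) atTop (nhds (dist (F p) w')) :=
    tendsto_const_nhds.dist hut
  by_cases hfar : ∃ᶠ n in atTop, bdist D p ≤ 2 * c * dist p (w n)
  · refine isClosed_Ici.mem_of_frequently_of_tendsto (b := atTop)
      (f := fun n => Φ * dist (F p) (F (w n))) (hfar.mono fun n hn => ?_) (hlim.const_mul Φ)
    refine hΦ p hp q hq _ (hwD n) (hpq.trans ?_)
    calc s * bdist D p ≤ s * (2 * c * dist p (w n)) := by gcongr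
      _ = _ := by ring
  · exfalso
    rw [not_frequently] at hfar
    have hd : 0 < dist (F p) w' := dist_pos.2 fun h => hw'n (h ▸ mem_image_of_mem F hp)
    have hcau : CauchySeq w := by
      rw [Metric.cauchySeq_iff]
      intro ε hε
      set K := M (bdist D p / ε)
      have hKpos : 0 < K := hM _
      have hut' := hut.cauchySeq
      rw [Metric.cauchySeq_iff] at hut'
      obtain ⟨N₁, hN₁⟩ := hut' (dist (F p) w' / 2 / K) (by positivity)
      obtain ⟨N₂, hN₂⟩ := eventually_atTop.1 (hlim.eventually (lt_mem_nhds (half_lt_self hd)))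
      obtain ⟨N₃, hN₃⟩ := eventually_atTop.1 hfar
      refine ⟨max N₁ (max N₂ N₃), fun m hm n hn => ?_⟩
      simp only [ge_iff_le, max_le_iff] at hm hn
      by_contra! hcon
      have h₁ := hN₁ m hm.1 n hn.1
      have h₂ := hN₂ m hm.2.1
      have h₃ := hN₃ m hm.2.2
      have h₄ := hQ (bdist D p / ε) (w m) (hwD m) p hp (w n) (hwD n) (by
        rw [div_mul_eq_mul_div, le_div_iff₀ hε, dist_comm]
        have : dist p (w m) ≤ bdist D p := by nlinarith [dist_nonneg (x := p) (y := w m)]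
        gcongr)
      rw [dist_comm] at h₄
      rw [lt_div_iff₀ hKpos] at h₁
      linarith
    obtain ⟨z, hz⟩ := cauchySeq_tendsto_of_complete hcau
    have hzp : 2 * c * dist p z ≤ bdist D p :=
      le_of_tendsto ((tendsto_const_nhds.dist hz).const_mul (2 * c))
        (hfar.mono fun n hn => (not_le.1 hn).le)
    have hzD : z ∈ D := hX.mem_of_lt_bdist hp (by nlinarith [dist_nonneg (x := p) (y := z)])
    have : Tendsto (fun n => F (w n)) atTop (nhds (F z)) :=
      (hF z hzD).tendsto.comp (tendsto_nhdsWithin_iff.2 ⟨hz, .of_forall hwD⟩)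
    exact hw'n (tendsto_nhds_unique hut this ▸ mem_image_of_mem F hzD)

end QuasisymmetryOnSets

section UniformImage

variable {X : Type*} [MetricSpace X] {Y : Type*} [MetricSpace Y]

/-- The diameter of the image under `F` of the initial piece `γ|[0,t]`. -/
noncomputable def imDiam {Z : Type*} (F : Z → Y) (γ : ℝ → Z) (t : ℝ) : ℝ :=
  Metric.diam ((fun u => F (γ u)) '' Icc 0 t)

lemma imDiam_nonneg {Z : Type*} (F : Z → Y) (γ : ℝ → Z) (t : ℝ) : 0 ≤ imDiam F γ t :=
  Metric.diam_nonneg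

lemma imDiam_le {Z : Type*} {F : Z → Y} {γ : ℝ → Z} {t B : ℝ} (ht : 0 ≤ t) (p : Y)
    (h : ∀ u ∈ Icc 0 t, dist p (F (γ u)) ≤ B) : imDiam F γ t ≤ 2 * B := by
  have hB : 0 ≤ B := dist_nonneg.trans (h 0 ⟨le_rfl, ht⟩)
  refine Metric.diam_le_of_forall_dist_le (by positivity) ?_
  rintro _ ⟨u, hu, rfl⟩ _ ⟨v, hv, rfl⟩
  linarith [dist_triangle_left (F (γ u)) (F (γ v)) p, h u hu, h v hv]

lemma CurveIn.dist_le_imDiam {F : X → Y} {D : Set X} (hF : ContinuousOn F D) {γ : ℝ → X}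
    {T : ℝ} {x y : X} (hγ : CurveIn D γ T x y) {t : ℝ} (ht : t ≤ T) {u v : ℝ}
    (hu : u ∈ Icc 0 t) (hv : v ∈ Icc 0 t) : dist (F (γ u)) (F (γ v)) ≤ imDiam F γ t := by
  refine Metric.dist_le_diam_of_mem (IsCompact.isBounded ?_) ⟨u, hu, rfl⟩ ⟨v, hv, rfl⟩
  exact isCompact_Icc.image_of_continuousOn
    ((hF.comp hγ.continuousOn hγ.mem).mono (Icc_subset_Icc_right ht))

/-- The image of a piece of `γ` that is deep inside `D` can be replaced by a curve of controlled
length that is deep inside the image of `D`. -/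
lemma CurveIn.exists_segment {c ε κ C : ℝ} (hc : 1 ≤ c) (hκ : 0 < κ) (hC : 0 < C)
    (hY : QCSpace c Y) {F : X → Y} {D : Set X} (hF : ContinuousOn F D) (hε : 0 < ε)
    (hpos' : ∀ z ∈ F '' D, 0 < bdist (F '' D) z)
    (hbig : ∀ p ∈ D, ∀ q ∈ D, dist p q ≤ 1 / κ * bdist D p →
      dist (F p) (F q) ≤ C * bdist (F '' D) (F p))
    (hsmall : ∀ p ∈ D, ∀ q ∈ D, dist p q ≤ ε * bdist D p →
      dist (F p) (F q) ≤ 1 / (2 * c) * bdist (F '' D) (F p))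
    {N : ℕ} (hN : 1 ≤ N * (ε * κ))
    {γ : ℝ → X} {T : ℝ} {x y : X} (hγ : CurveIn D γ T x y) {s t : ℝ} (hs : 0 ≤ s) (hst : s ≤ t)
    (ht : t ≤ T) (hdeep : ∀ u ∈ Icc s t, κ * t ≤ bdist D (γ u)) :
    ∃ γ' L, CurveIn (F '' D) γ' L (F (γ s)) (F (γ t)) ∧ L ≤ N * c * imDiam F γ t ∧
      ∀ u ∈ Icc 0 L, imDiam F γ t ≤ 4 * C * bdist (F '' D) (γ' u) := by
  have hc0 : 0 < c := by linarith
  have ht0 : 0 ≤ t := hs.trans hst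
  have hN0 : (0 : ℝ) < N := by
    rcases Nat.eq_zero_or_pos N with h | h
    · simp [h] at hN; linarith
    · exact_mod_cast h
  set τ : ℕ → ℝ := fun k => s + k * ((t - s) / N) with hτ
  have hh : 0 ≤ (t - s) / N := div_nonneg (by linarith) hN0.le
  have hτN : τ N = t := by simp only [hτ]; field_simp; ring
  have hτmem : ∀ k ≤ N, τ k ∈ Icc s t := by
    intro k hk
    refine ⟨by simp only [hτ]; nlinarith [hh, (Nat.cast_nonneg k : (0 : ℝ) ≤ k)], ?_⟩
    rw [← hτN]
    simp only [hτ]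
    gcongr
  have hτ0 : ∀ k ≤ N, τ k ∈ Icc 0 t := fun k hk => ⟨hs.trans (hτmem k hk).1, (hτmem k hk).2⟩
  have hτT : ∀ k ≤ N, τ k ∈ Icc 0 T := fun k hk => ⟨(hτ0 k hk).1, (hτ0 k hk).2.trans ht⟩
  have hD : ∀ k ≤ N, γ (τ k) ∈ D := fun k hk => hγ.mem _ (hτT k hk)
  have hstep : ∀ k < N, c * dist (F (γ (τ k))) (F (γ (τ (k + 1)))) ≤
      bdist (F '' D) (F (γ (τ k))) / 2 := by
    intro k hk
    have := hsmall _ (hD k hk.le) _ (hD (k + 1) hk) ?_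
    · calc c * dist (F (γ (τ k))) (F (γ (τ (k + 1))))
          ≤ c * (1 / (2 * c) * bdist (F '' D) (F (γ (τ k)))) := by gcongr
        _ = _ := by field_simp
    · calc dist (γ (τ k)) (γ (τ (k + 1))) ≤ |τ k - τ (k + 1)| :=
            hγ.dist_le (hτT k hk.le) (hτT (k + 1) hk)
        _ = (t - s) / N := by
            rw [abs_sub_comm, show τ (k + 1) - τ k = (t - s) / N by
              simp only [hτ]; push_cast; ring, abs_of_nonneg hh]
        _ ≤ t / N := by gcongr; linarith
        _ ≤ ε * (κ * t) := by rw [div_le_iff₀ hN0]; nlinarith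
        _ ≤ ε * bdist D (γ (τ k)) := by gcongr; exact hdeep _ (hτmem k hk.le)
  have hdeep' : ∀ k ≤ N, imDiam F γ t / (2 * C) ≤ bdist (F '' D) (F (γ (τ k))) := by
    intro k hk
    rw [div_le_iff₀ (by positivity)]
    have := imDiam_le (F := F) (γ := γ) ht0 (F (γ (τ k)))
      (B := C * bdist (F '' D) (F (γ (τ k)))) fun u hu => ?_
    · linarith
    · refine hbig _ (hD k hk) _ (hγ.mem u ⟨hu.1, hu.2.trans ht⟩) ?_
      have h₁ := hγ.dist_le (hτT k hk) (t := u) ⟨hu.1, hu.2.trans ht⟩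
      have h₂ : |τ k - u| ≤ t := abs_le.2 ⟨by linarith [(hτ0 k hk).1, hu.2],
        by linarith [(hτ0 k hk).2, hu.1]⟩
      rw [one_div_mul_eq_div, le_div_iff₀ hκ]
      have := hdeep _ (hτmem k hk)
      nlinarith
  obtain ⟨γ', L, h₁, h₂, h₃⟩ := hY.exists_curve_of_chain (D := F '' D) (ρ := imDiam F γ t)
    (m := imDiam F γ t / (2 * C)) hc0.le (fun k => F (γ (τ k))) N
    (fun k hk => mem_image_of_mem F (hD k hk))
    (fun k hk => hpos' _ (mem_image_of_mem F (hD k hk)))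
    (fun k hk => hγ.dist_le_imDiam hF ht (hτ0 k hk.le) (hτ0 (k + 1) hk)) hstep hdeep'
  refine ⟨γ', L, ?_, by linarith, fun u hu => ?_⟩
  · have e : F (γ (τ 0)) = F (γ s) := by simp [hτ]
    rwa [e, hτN] at h₁
  · have := h₃ u hu
    rw [div_div, div_le_iff₀ (by positivity)] at this
    linarith

/-- The image of a curve with the one-sided cone condition can be replaced by a curve with the
one-sided cone condition, of length controlled by the diameter of the image. -/
lemma CurveIn.exists_cone {b c ε κ l C σ : ℝ} (hb : 1 ≤ b) (hc : 1 ≤ c) (hκ : 0 < κ) (hC : 0 < C)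
    (hl : 0 < l) (hl1 : l < 1) (hκ₁ : κ * b ≤ l) (hκ₂ : κ * (2 * b * (1 + b)) ≤ 1)
    (hlσ : l * (2 * b) ≤ σ)
    (hY : QCSpace c Y) {F : X → Y} {D : Set X} (hF : ContinuousOn F D) (hε : 0 < ε)
    (hpos : ∀ z ∈ D, 0 < bdist D z)
    (hpos' : ∀ z ∈ F '' D, 0 < bdist (F '' D) z)
    (hbig : ∀ p ∈ D, ∀ q ∈ D, dist p q ≤ 1 / κ * bdist D p →
      dist (F p) (F q) ≤ C * bdist (F '' D) (F p))
    (hsmall : ∀ p ∈ D, ∀ q ∈ D, dist p q ≤ ε * bdist D p →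
      dist (F p) (F q) ≤ 1 / (2 * c) * bdist (F '' D) (F p))
    (hdecay : RatioBound F D σ (1 / 4))
    {N : ℕ} (hN : 1 ≤ N * (ε * κ))
    {γ : ℝ → X} {T : ℝ} {x y : X} (hγ : CurveIn D γ T x y)
    (hcone : ∀ t ∈ Icc 0 T, t ≤ b * bdist D (γ t)) :
    ∃ γ' L, CurveIn (F '' D) γ' L (F x) (F y) ∧ L ≤ 2 * (N * c) * imDiam F γ T ∧
      ∀ u ∈ Icc 0 L, u ≤ 8 * (N * c) * C * bdist (F '' D) (γ' u) := by
  have hNc : 0 ≤ N * c := by positivity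
  have hx : x ∈ D := hγ.source ▸ hγ.mem 0 ⟨le_rfl, hγ.nonneg⟩
  have hδ := hpos x hx
  have hdist : ∀ t ∈ Icc 0 T, dist x (γ t) ≤ t := by
    intro t ht
    have := hγ.dist_le (s := 0) ⟨le_rfl, hγ.nonneg⟩ ht
    rwa [abs_sub_comm, sub_zero, abs_of_nonneg ht.1, hγ.source] at this
  have key : ∀ n : ℕ, ∀ t ∈ Icc 0 T, t * l ^ n ≤ 2 * b * bdist D x →
      ∃ γ' L, CurveIn (F '' D) γ' L (F x) (F (γ t)) ∧ L ≤ 2 * (N * c) * imDiam F γ t ∧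
        ∀ u ∈ Icc 0 L, u ≤ 8 * (N * c) * C * bdist (F '' D) (γ' u) := by
    have base : ∀ t ∈ Icc 0 T, t ≤ 2 * b * bdist D x →
      ∃ γ' L, CurveIn (F '' D) γ' L (F x) (F (γ t)) ∧ L ≤ 2 * (N * c) * imDiam F γ t ∧
        ∀ u ∈ Icc 0 L, u ≤ 8 * (N * c) * C * bdist (F '' D) (γ' u) := by
      intro t ht htb
      obtain ⟨γ', L, h₁, h₂, h₃⟩ := hγ.exists_segment hc hκ hC hY hF hε hpos' hbig hsmall hN
        le_rfl ht.1 ht.2 (fun u hu => by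
          have hu' : u ∈ Icc 0 T := ⟨hu.1, hu.2.trans ht.2⟩
          have a₁ := hcone u hu'
          have a₂ := hdist u hu'
          have a₃ := bdist_le_add_dist D x (γ u)
          have a₄ : bdist D x ≤ (1 + b) * bdist D (γ u) := by linarith
          have a₅ : t ≤ 2 * b * (1 + b) * bdist D (γ u) := by nlinarith
          calc κ * t ≤ κ * (2 * b * (1 + b) * bdist D (γ u)) := by gcongr
            _ = κ * (2 * b * (1 + b)) * bdist D (γ u) := by ring
            _ ≤ 1 * bdist D (γ u) := by gcongr; exact bdist_nonneg _ _
            _ = _ := one_mul _)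
      rw [hγ.source] at h₁
      have hR := imDiam_nonneg F γ t
      refine ⟨γ', L, h₁, by nlinarith, fun u hu => ?_⟩
      have := mul_le_mul_of_nonneg_left (h₃ u hu) hNc
      have := mul_nonneg (mul_nonneg hNc hC.le) (bdist_nonneg (F '' D) (γ' u))
      linarith [hu.2]
    intro n
    induction n with
    | zero => simpa using base
    | succ n ih =>
      intro t ht htn
      rcases le_or_gt t (2 * b * bdist D x) with htb | htb
      · exact base t ht htb
      have hlt : l * t ≤ t := by nlinarith [ht.1]
      have hlt0 : 0 ≤ l * t := mul_nonneg hl.le ht.1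
      obtain ⟨γ₁, L₁, h₁, hL₁, hc₁⟩ := ih (l * t) ⟨hlt0, hlt.trans ht.2⟩
        (by rw [pow_succ] at htn; linarith)
      obtain ⟨γ₂, L₂, h₂, hL₂, hc₂⟩ := hγ.exists_segment hc hκ hC hY hF hε hpos' hbig hsmall hN
        hlt0 hlt ht.2 (fun u hu => by
          have a₁ := hcone u ⟨hlt0.trans hu.1, hu.2.trans ht.2⟩
          have a₂ := mul_le_mul_of_nonneg_right hκ₁ ht.1
          have a₃ : b * (κ * t) ≤ b * bdist D (γ u) := by linarith [hu.1]
          exact le_of_mul_le_mul_left a₃ (by linarith))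
      have hhalf : imDiam F γ (l * t) ≤ 2 * (1 / 4 * imDiam F γ t) := by
        refine imDiam_le hlt0 (F x) fun u hu => ?_
        have hu' : u ∈ Icc 0 T := ⟨hu.1, hu.2.trans (hlt.trans ht.2)⟩
        have a₁ := hcone t ht
        have a₂ := bdist_le_add_dist D (γ t) x
        rw [dist_comm] at a₂
        have a₃ : t ≤ 2 * b * dist x (γ t) := by nlinarith
        have a₄ := hdecay x hx (γ u) (hγ.mem u hu') (γ t) (hγ.mem t ht) (by
          calc dist x (γ u) ≤ l * t := (hdist u hu').trans hu.2
            _ ≤ l * (2 * b * dist x (γ t)) := by gcongr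
            _ = l * (2 * b) * dist x (γ t) := by ring
            _ ≤ _ := by gcongr)
        have a₅ := hγ.dist_le_imDiam hF ht.2 ⟨le_rfl, ht.1⟩ ⟨ht.1, le_rfl⟩
        rw [hγ.source] at a₅
        linarith
      have hLL : L₁ + L₂ ≤ 2 * (N * c) * imDiam F γ t := by
        have := mul_le_mul_of_nonneg_left hhalf hNc
        linarith
      obtain ⟨γ', h, e₁, e₂⟩ := h₁.concat h₂
      refine ⟨γ', _, h, hLL, fun u hu => ?_⟩
      rcases le_total u L₁ with huL | huL
      · rw [e₁ u huL]
        exact hc₁ u ⟨hu.1, huL⟩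
      · rw [e₂ u huL]
        have := mul_le_mul_of_nonneg_left
          (hc₂ (u - L₁) ⟨by linarith, by linarith [hu.2]⟩) hNc
        linarith [hu.2]
  obtain ⟨n, hn⟩ := exists_pow_lt_of_lt_one (show 0 < 2 * b * bdist D x / (T + 1) from
    div_pos (by positivity) (by linarith [hγ.nonneg])) hl1
  have hTn : T * l ^ n ≤ 2 * b * bdist D x := by
    rw [lt_div_iff₀ (by linarith [hγ.nonneg])] at hn
    nlinarith [pow_pos hl n]
  simpa [hγ.target] using key n T ⟨hγ.nonneg, le_rfl⟩ hTn

/-- Uniform domains are preserved by quasisymmetric maps between open subsets of quasiconvex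
spaces. -/
theorem exists_isUniform_image {b c : ℝ} (hb : 1 ≤ b) (hc : 1 ≤ c) {M σ : ℝ → ℝ}
    (hM : ∀ s, 0 < M s) (hσ : ∀ ε, 0 < ε → 0 < σ ε) :
    ∃ b' : ℝ, 1 ≤ b' ∧ ∀ (X Y : Type) [MetricSpace X] [MetricSpace Y] [CompleteSpace X],
      QCSpace c X → QCSpace c Y → ∀ (F : X → Y) (D : Set X), IsOpen D → ContinuousOn F D →
        IsOpen (F '' D) → (frontier D).Nonempty → (frontier (F '' D)).Nonempty →
        (∀ s, RatioBound F D s (M s)) → (∀ ε, 0 < ε → RatioBound F D (σ ε) ε) →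
        IsUniform b D → IsUniform b' (F '' D) := by
  have hb0 : 0 < b := by linarith
  have hc0 : 0 < c := by linarith
  obtain ⟨ε, hεdef⟩ : ∃ ε, ε = σ (1 / (2 * c)) / (2 * c) := ⟨_, rfl⟩
  have hε : 0 < ε := hεdef ▸ div_pos (hσ _ (by positivity)) (by positivity)
  obtain ⟨l, hldef⟩ : ∃ l, l = min (1 / 2) (σ (1 / 4) / (2 * b)) := ⟨_, rfl⟩
  have hl : 0 < l := hldef ▸ lt_min (by norm_num) (div_pos (hσ _ (by norm_num)) (by positivity))
  have hl1 : l < 1 := (hldef ▸ min_le_left _ _ : l ≤ 1 / 2).trans_lt (by norm_num)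
  have hlσ : l * (2 * b) ≤ σ (1 / 4) :=
    (le_div_iff₀ (by positivity)).1 (hldef ▸ min_le_right _ _)
  obtain ⟨κ, hκdef⟩ : ∃ κ, κ = min (l / b) (1 / (2 * b * (1 + b))) := ⟨_, rfl⟩
  have hκ : 0 < κ := hκdef ▸ lt_min (by positivity) (by positivity)
  have hκ₁ : κ * b ≤ l := (le_div_iff₀ hb0).1 (hκdef ▸ min_le_left _ _)
  have hκ₂ : κ * (2 * b * (1 + b)) ≤ 1 :=
    (le_div_iff₀ (by positivity)).1 (hκdef ▸ min_le_right _ _)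
  obtain ⟨C, hCdef⟩ : ∃ C, C = M (2 * c * (1 / κ)) := ⟨_, rfl⟩
  have hC : 0 < C := hCdef ▸ hM _
  obtain ⟨N, hNle⟩ := exists_nat_ge (1 / (ε * κ))
  have hN : 1 ≤ N * (ε * κ) := (div_le_iff₀ (by positivity)).1 hNle
  obtain ⟨B, hB⟩ : ∃ B, B = 8 * (N * c) * C := ⟨_, rfl⟩
  obtain ⟨A, hA⟩ : ∃ A, A = 2 * (N * c) := ⟨_, rfl⟩
  have hA0 : 0 ≤ A := by rw [hA]; positivity
  refine ⟨max 1 (max B (4 * A * M b)), le_max_left _ _, ?_⟩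
  intro X Y _ _ _ hX hY F D hD hF hD' hf hf' hQ hS hU
  have hpos : ∀ z ∈ D, 0 < bdist D z := fun z hz => bdist_pos hD hf hz
  have hpos' : ∀ z ∈ F '' D, 0 < bdist (F '' D) z := fun z hz => bdist_pos hD' hf' hz
  have hbig : ∀ p ∈ D, ∀ q ∈ D, dist p q ≤ 1 / κ * bdist D p →
      dist (F p) (F q) ≤ C * bdist (F '' D) (F p) := fun p hp q hq h =>
    dist_le_mul_bdist hc hX hF hD' hf' hM hQ (by positivity) hC (hCdef ▸ hQ _) hp hq
      (hpos p hp) h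
  have hsmall : ∀ p ∈ D, ∀ q ∈ D, dist p q ≤ ε * bdist D p →
      dist (F p) (F q) ≤ 1 / (2 * c) * bdist (F '' D) (F p) := fun p hp q hq h =>
    dist_le_mul_bdist hc hX hF hD' hf' hM hQ hε.le (by positivity)
      (by rw [hεdef, mul_div_cancel₀ _ (by positivity)]; exact hS _ (by positivity)) hp hq
      (hpos p hp) h
  have hdecay := hS (1 / 4) (by norm_num)
  have half : ∀ (γ : ℝ → X) (L : ℝ) (x y : X), x ∈ D → y ∈ D → CurveIn D γ L x y →
      L ≤ b * dist x y → (∀ t ∈ Icc 0 L, min t (L - t) ≤ b * bdist D (γ t)) →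
      ∃ γ' L', CurveIn (F '' D) γ' L' (F x) (F (γ (L / 2))) ∧
        L' ≤ A * (2 * (M b * dist (F x) (F y))) ∧
        ∀ u ∈ Icc 0 L', u ≤ B * bdist (F '' D) (γ' u) := by
    intro γ L x y hx hy hγ hL hcone
    have hL0 := hγ.nonneg
    have hh := hγ.truncate (t := L / 2) ⟨by linarith, by linarith⟩
    obtain ⟨γ', L', h₁, h₂, h₃⟩ := hh.exists_cone hb hc hκ hC hl hl1 hκ₁ hκ₂ hlσ hY hF hε hpos
      hpos' hbig hsmall hdecay hN (fun t ht => by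
        have := hcone t ⟨ht.1, by linarith [ht.2]⟩
        rwa [min_eq_left (by linarith [ht.2])] at this)
    rw [← hA] at h₂
    rw [← hB] at h₃
    refine ⟨γ', L', h₁, h₂.trans (mul_le_mul_of_nonneg_left ?_ hA0), h₃⟩
    refine imDiam_le (by linarith) (F x) fun u hu => ?_
    refine hQ b x hx _ (hh.mem u hu) y hy ?_
    have := hh.dist_le (s := 0) (t := u) ⟨le_rfl, by linarith⟩ hu
    rw [abs_sub_comm, sub_zero, abs_of_nonneg hu.1, hh.source] at this
    linarith [hu.2]
  rintro _ ⟨x, hx, rfl⟩ _ ⟨y, hy, rfl⟩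
  obtain ⟨γ, L, hγ, hL, hcone⟩ := hU x hx y hy
  obtain ⟨γ₁, L₁, h₁, hL₁, hc₁⟩ := half γ L x y hx hy hγ hL hcone
  obtain ⟨γ₂, L₂, h₂, hL₂, hc₂⟩ := half _ L y x hy hx hγ.reverse (by rwa [dist_comm])
    (fun t ht => by
      have := hcone (L - t) ⟨by linarith [ht.2], by linarith [ht.1]⟩
      rwa [sub_sub_cancel, min_comm] at this)
  rw [sub_half] at h₂
  rw [dist_comm (F y)] at hL₂
  obtain ⟨γ', h, e₁, e₂⟩ := h₁.concat h₂.reverse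
  have n₁ := h₁.nonneg
  have n₂ := h₂.nonneg
  have hBb : ∀ z, B * bdist (F '' D) z ≤ max 1 (max B (4 * A * M b)) * bdist (F '' D) z :=
    fun z => mul_le_mul_of_nonneg_right ((le_max_left _ _).trans (le_max_right _ _))
      (bdist_nonneg _ _)
  refine ⟨γ', _, h, ?_, fun t ht => ?_⟩
  · calc L₁ + L₂ ≤ 4 * A * M b * dist (F x) (F y) := by linarith
      _ ≤ _ := mul_le_mul_of_nonneg_right ((le_max_right _ _).trans (le_max_right _ _))
        dist_nonneg
  · refine le_trans ?_ (hBb _)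
    rcases le_total t L₁ with htL | htL
    · rw [e₁ t htL]
      exact (min_le_left _ _).trans (hc₁ t ⟨ht.1, htL⟩)
    · rw [e₂ t htL]
      refine (min_le_right _ _).trans ?_
      have := hc₂ (L₂ - (t - L₁)) ⟨by linarith [ht.2], by linarith⟩
      linarith

end UniformImage

/-- Theorem 1: Suppose `X, Y` are `c`-quasiconvex complete metric
spaces, `G ⊊ X` a domain, `G' ⊊ Y` a `c₁`-quasiconvex domain, and both
`f : G → G'` and `f⁻¹` are weakly `H`-quasisymmetric. Then the image of every
`b`-uniform subdomain `D ⊆ G` is `b'`-uniform, with `b'` depending only on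
`c, c₁, H, b`. -/
theorem stmt12 (c c₁ H b : ℝ) (hc : 1 ≤ c) (hc₁ : 1 ≤ c₁) (hH : 1 ≤ H)
    (hb : 1 ≤ b) :
    ∃ b' : ℝ, 1 ≤ b' ∧
      ∀ (X Y : Type) [MetricSpace X] [MetricSpace Y]
        [CompleteSpace X] [CompleteSpace Y], QCSpace c X → QCSpace c Y →
        ∀ (G : Set X) (G' : Set Y), IsProperDomain G → IsProperDomain G' →
          QCSet c₁ G' →
          ∀ f : ↥G ≃ₜ ↥G', WeakQS H (⇑f) → WeakQS H (⇑f.symm) →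
            ∀ D : Set X, D ⊆ G → IsDomainSet D → IsUniform b D →
              IsUniform b' (imSet f D) := by
  have hb0 : 0 ≤ b := by linarith
  have hc₁0 : 0 ≤ c₁ := by linarith
  obtain ⟨b', hb', hmain⟩ := exists_isUniform_image hb hc
    (M := fun s => chainConst H ⌈b * s⌉₊)
    (σ := fun ε => 1 / (2 * chainConst H ⌈c₁ * (1 / ε)⌉₊))
    (fun s => chainConst_pos hH _)
    (fun ε _ => by have := chainConst_pos hH ⌈c₁ * (1 / ε)⌉₊; positivity)
  refine ⟨b', hb', ?_⟩
  intro X Y _ _ _ _ hX hY G G' hG hG' hQ f hf hfi D hDG hD hU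
  classical
  obtain ⟨x₀, hx₀⟩ := hG.2.1.nonempty
  set F : X → Y := fun x => if h : x ∈ G then (f ⟨x, h⟩ : Y) else f ⟨x₀, hx₀⟩
  set Fi : Y → X := fun y => if h : y ∈ G' then (f.symm ⟨y, h⟩ : X) else x₀
  have eF : ∀ x (h : x ∈ G), F x = f ⟨x, h⟩ := fun x h => dif_pos h
  have eFi : ∀ y (h : y ∈ G'), Fi y = f.symm ⟨y, h⟩ := fun y h => dif_pos h
  have hmaps : MapsTo F G G' := fun x hx => by rw [eF x hx]; exact Subtype.coe_prop _
  have hinv : ∀ x ∈ G, Fi (F x) = x := by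
    intro x hx
    rw [eFi _ (hmaps hx)]
    simp [eF x hx]
  have him : imSet f D = F '' D := by
    ext y
    constructor
    · rintro ⟨_, ⟨⟨x, hx⟩, hxD, rfl⟩, rfl⟩
      exact ⟨x, hxD, eF x hx⟩
    · rintro ⟨x, hxD, rfl⟩
      exact ⟨_, ⟨⟨x, hDG hxD⟩, hxD, rfl⟩, (eF x (hDG hxD)).symm⟩
  have hFG : ContinuousOn F G := by
    rw [continuousOn_iff_continuous_domRestrict]
    have : G.domRestrict F = fun x => (f x : Y) := funext fun x => eF x x.2
    rw [this]
    fun_prop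
  have hopen : IsOpen (F '' D) := by
    rw [← him]
    exact hG'.1.isOpenMap_subtype_val _ (f.isOpenMap _ (hD.1.preimage continuous_subtype_val))
  have hweak : RatioBound F D 1 H := by
    intro x hx a ha w hw h
    rw [eF x (hDG hx), eF a (hDG ha), eF w (hDG hw)]
    exact hf ⟨x, hDG hx⟩ ⟨a, hDG ha⟩ ⟨w, hDG hw⟩ (by simpa [Subtype.dist_eq] using h)
  have hweaki : RatioBound Fi G' 1 H := by
    intro x hx a ha w hw h
    rw [eFi x hx, eFi a ha, eFi w hw]
    exact hfi ⟨x, hx⟩ ⟨a, ha⟩ ⟨w, hw⟩ (by simpa [Subtype.dist_eq] using h)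
  have hDqc : QCSet b D := by
    intro x hx y hy
    obtain ⟨γ, L, h, hL, -⟩ := hU x hx y hy
    exact ⟨γ, L, h, hL⟩
  have hne : ∀ {Z : Type} {S T : Set Z}, S ⊆ T → T ≠ univ → S ≠ univ :=
    fun hST hT hS => hT (univ_subset_iff.1 (hS ▸ hST))
  rw [him]
  refine hmain X Y hX hY F D hD.1 (hFG.mono hDG) hopen
    (hX.frontier_nonempty hD.2.nonempty (hne hDG hG.2.2))
    (hY.frontier_nonempty (hD.2.nonempty.image F)
      (hne ((image_mono hDG).trans hmaps.image_subset) hG'.2.2))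
    (fun s => hDqc.ratioBound hb0 hH hweak) (fun ε hε => ?_) hU
  exact RatioBound.of_leftInverse (chainConst_pos hH _) hε (fun x hx => hmaps (hDG hx))
    (fun x hx => hinv x (hDG hx)) (hQ.ratioBound hc₁0 hH hweaki)
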